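/- arXiv:2212.13600 — 4 statements merged into one kernel-verified Lean document; each statement's English description precedes it below -/
import Mathlib

section
/- Let (A,[·,·,·]) be a 3-Lie algebra over K, let (V;ρ) be a representation of (A,[·,·,·]), and let T : V → A be a linear map satisfying [Tu,Tv,Tw] = T(ρ(Tu,Tv)w + ρ(Tv,Tw)u + ρ(Tw,Tu)v) for all u,v,w ∈ V (a relative Rota–Baxter operator). Then the operation {u,v,w} = ρ(Tu,Tv)w makes V a 3-pre-Lie algebra. -/
open TensorProduct

/-- The 3-Leibnizator `L(x1,x2,x3,x4) = [x1,x2,x3·x4] − x3·[x1,x2,x4] − [x1,x2,x3]·x4`. -/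
def leib3 {K : Type*} [Field K] {A : Type*} [AddCommGroup A] [Module K A]
    (m : A →ₗ[K] A →ₗ[K] A) (b : A →ₗ[K] A →ₗ[K] A →ₗ[K] A) (x1 x2 x3 x4 : A) : A :=
  b x1 x2 (m x3 x4) - m x3 (b x1 x2 x4) - m (b x1 x2 x3) x4

/-- A ternary F-manifold algebra. -/
structure TernaryFM (K : Type*) [Field K] (A : Type*) [AddCommGroup A] [Module K A] where
  mul : A →ₗ[K] A →ₗ[K] A
  br : A →ₗ[K] A →ₗ[K] A →ₗ[K] A
  mul_comm : ∀ x y, mul x y = mul y x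
  mul_assoc : ∀ x y z, mul (mul x y) z = mul x (mul y z)
  br_skew₁₂ : ∀ x y z, br x y z = - br y x z
  br_skew₂₃ : ∀ x y z, br x y z = - br x z y
  fund : ∀ x1 x2 x3 x4 x5,
    br x1 x2 (br x3 x4 x5) =
      br (br x1 x2 x3) x4 x5 + br x3 (br x1 x2 x4) x5 + br x3 x4 (br x1 x2 x5)
  leib : ∀ x1 x2 x3 x4 x5,
    leib3 mul br (mul x1 x2) x3 x4 x5 =
      mul x1 (leib3 mul br x2 x3 x4 x5) + mul x2 (leib3 mul br x1 x3 x4 x5)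

/-- A commutative associative algebra structure (as a bilinear map). -/
structure CommAssocAlg (K : Type*) [Field K] (B : Type*) [AddCommGroup B] [Module K B] where
  mul : B →ₗ[K] B →ₗ[K] B
  mul_comm : ∀ x y, mul x y = mul y x
  mul_assoc : ∀ x y z, mul (mul x y) z = mul x (mul y z)

/-- A ternary Nambu–Poisson algebra. -/
structure TernaryNP (K : Type*) [Field K] (A : Type*) [AddCommGroup A] [Module K A] where
  mul : A →ₗ[K] A →ₗ[K] A
  br : A →ₗ[K] A →ₗ[K] A →ₗ[K] A
  mul_comm : ∀ x y, mul x y = mul y x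
  mul_assoc : ∀ x y z, mul (mul x y) z = mul x (mul y z)
  br_skew₁₂ : ∀ x y z, br x y z = - br y x z
  br_skew₂₃ : ∀ x y z, br x y z = - br x z y
  fund : ∀ x1 x2 x3 x4 x5,
    br x1 x2 (br x3 x4 x5) =
      br (br x1 x2 x3) x4 x5 + br x3 (br x1 x2 x4) x5 + br x3 x4 (br x1 x2 x5)
  leibniz : ∀ x1 x2 x3 x4,
    br x1 x2 (mul x3 x4) = mul x3 (br x1 x2 x4) + mul (br x1 x2 x3) x4

/-- The binary Leibnizator `L(x,y,z) = [x,y·z] − [x,y]·z − y·[x,z]`. -/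
def leib2 {K : Type*} [Field K] {A : Type*} [AddCommGroup A] [Module K A]
    (m : A →ₗ[K] A →ₗ[K] A) (b : A →ₗ[K] A →ₗ[K] A) (x y z : A) : A :=
  b x (m y z) - m (b x y) z - m y (b x z)

/-- An F-manifold algebra. -/
structure FManifoldAlg (K : Type*) [Field K] (A : Type*) [AddCommGroup A] [Module K A] where
  mul : A →ₗ[K] A →ₗ[K] A
  br : A →ₗ[K] A →ₗ[K] A
  mul_comm : ∀ x y, mul x y = mul y x
  mul_assoc : ∀ x y z, mul (mul x y) z = mul x (mul y z)
  br_skew : ∀ x y, br x y = - br y x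
  jacobi : ∀ x y z, br x (br y z) + br y (br z x) + br z (br x y) = 0
  hm : ∀ x y z w,
    leib2 mul br (mul x y) z w = mul x (leib2 mul br y z w) + mul y (leib2 mul br x z w)

section Rep

variable {K : Type*} [Field K] {A V : Type*} [AddCommGroup A] [Module K A]
  [AddCommGroup V] [Module K V]

/-- Representation of the underlying 3-Lie algebra. -/
def Is3LieRep (T : TernaryFM K A) (ρ : A →ₗ[K] A →ₗ[K] V →ₗ[K] V) : Prop :=
  (∀ x y, ρ x y = - ρ y x) ∧
  (∀ x1 x2 x3 x4,
    ρ x1 x2 ∘ₗ ρ x3 x4 - ρ x3 x4 ∘ₗ ρ x1 x2 = ρ (T.br x1 x2 x3) x4 - ρ (T.br x1 x2 x4) x3) ∧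
  (∀ x1 x2 x3 x4,
    ρ (T.br x1 x2 x3) x4 = ρ x1 x2 ∘ₗ ρ x3 x4 + ρ x2 x3 ∘ₗ ρ x1 x4 + ρ x3 x1 ∘ₗ ρ x2 x4)

/-- Representation of the underlying commutative associative algebra. -/
def IsAssocRep (T : TernaryFM K A) (μ : A →ₗ[K] V →ₗ[K] V) : Prop :=
  ∀ x y, μ (T.mul x y) = μ x ∘ₗ μ y

/-- `L1(x,y,z,u) = ρ(x,y)μ(z)u − μ(z)ρ(x,y)u − μ([x,y,z])u`. -/
def L1 (T : TernaryFM K A) (ρ : A →ₗ[K] A →ₗ[K] V →ₗ[K] V) (μ : A →ₗ[K] V →ₗ[K] V)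
    (x y z : A) (u : V) : V :=
  ρ x y (μ z u) - μ z (ρ x y u) - μ (T.br x y z) u

/-- `L2(x,y,z,u) = μ(z)ρ(x,y)u + μ(y)ρ(x,z)u − ρ(x,y·z)u`. -/
def L2 (T : TernaryFM K A) (ρ : A →ₗ[K] A →ₗ[K] V →ₗ[K] V) (μ : A →ₗ[K] V →ₗ[K] V)
    (x y z : A) (u : V) : V :=
  μ z (ρ x y u) + μ y (ρ x z u) - ρ x (T.mul y z) u

/-- `L3(x,y,z,u) = ρ(x,y)μ(z)u + ρ(x,z)μ(y)u − ρ(x,y·z)u`. -/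
def L3 (T : TernaryFM K A) (ρ : A →ₗ[K] A →ₗ[K] V →ₗ[K] V) (μ : A →ₗ[K] V →ₗ[K] V)
    (x y z : A) (u : V) : V :=
  ρ x y (μ z u) + ρ x z (μ y u) - ρ x (T.mul y z) u

/-- Representation of a ternary F-manifold algebra. -/
def IsFMRep (T : TernaryFM K A) (ρ : A →ₗ[K] A →ₗ[K] V →ₗ[K] V)
    (μ : A →ₗ[K] V →ₗ[K] V) : Prop :=
  Is3LieRep T ρ ∧ IsAssocRep T μ ∧
  (∀ x1 x2 x3 x4 u, L1 T ρ μ (T.mul x1 x2) x3 x4 u =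
      μ x1 (L1 T ρ μ x2 x3 x4 u) + μ x2 (L1 T ρ μ x1 x3 x4 u)) ∧
  (∀ x1 x2 x3 x4 u, L2 T ρ μ (T.mul x1 x2) x3 x4 u =
      μ x1 (L2 T ρ μ x2 x3 x4 u) + μ x2 (L2 T ρ μ x1 x3 x4 u)) ∧
  (∀ x1 x2 x3 x4 u, μ (leib3 T.mul T.br x1 x2 x3 x4) u =
      L2 T ρ μ x2 x3 x4 (μ x1 u) - μ x1 (L2 T ρ μ x2 x3 x4 u))

/-- Relative Rota–Baxter operator on a ternary F-manifold algebra. -/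
def IsRelRB (T : TernaryFM K A) (ρ : A →ₗ[K] A →ₗ[K] V →ₗ[K] V)
    (μ : A →ₗ[K] V →ₗ[K] V) (Tm : V →ₗ[K] A) : Prop :=
  (∀ u v, T.mul (Tm u) (Tm v) = Tm (μ (Tm u) v + μ (Tm v) u)) ∧
  (∀ u v w, T.br (Tm u) (Tm v) (Tm w) =
      Tm (ρ (Tm u) (Tm v) w + ρ (Tm v) (Tm w) u + ρ (Tm w) (Tm u) v))

end Rep

section Pre

variable {K : Type*} [Field K] {A : Type*} [AddCommGroup A] [Module K A]

/-- Cyclic sum bracket `[x,y,z]^C = {x,y,z} + {y,z,x} + {z,x,y}`. -/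
def cbr (t : A →ₗ[K] A →ₗ[K] A →ₗ[K] A) (x y z : A) : A :=
  t x y z + t y z x + t z x y

/-- Symmetrized product `x·y = x⋄y + y⋄x`. -/
def sym (d : A →ₗ[K] A →ₗ[K] A) (x y : A) : A := d x y + d y x

/-- `F1(x1,x2,x3,x4) = {x1,x2,x3⋄x4} − x3⋄{x1,x2,x4} − [x1,x2,x3]⋄x4`. -/
def F1 (d : A →ₗ[K] A →ₗ[K] A) (t : A →ₗ[K] A →ₗ[K] A →ₗ[K] A) (x1 x2 x3 x4 : A) : A :=
  t x1 x2 (d x3 x4) - d x3 (t x1 x2 x4) - d (cbr t x1 x2 x3) x4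

/-- `F2(x1,x2,x3,x4) = x3⋄{x1,x2,x4} + x2⋄{x1,x3,x4} − {x1,x2·x3,x4}`. -/
def F2 (d : A →ₗ[K] A →ₗ[K] A) (t : A →ₗ[K] A →ₗ[K] A →ₗ[K] A) (x1 x2 x3 x4 : A) : A :=
  d x3 (t x1 x2 x4) + d x2 (t x1 x3 x4) - t x1 (sym d x2 x3) x4

/-- The 3-Leibnizator of the sub-adjacent operations. -/
def Lpre (d : A →ₗ[K] A →ₗ[K] A) (t : A →ₗ[K] A →ₗ[K] A →ₗ[K] A) (x1 x2 x3 x4 : A) : A :=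
  cbr t x1 x2 (sym d x3 x4) - sym d x3 (cbr t x1 x2 x4) - sym d (cbr t x1 x2 x3) x4

/-- A 3-pre-Lie algebra. -/
structure ThreePreLie (K : Type*) [Field K] (A : Type*) [AddCommGroup A] [Module K A] where
  tri : A →ₗ[K] A →ₗ[K] A →ₗ[K] A
  tri_skew : ∀ x y z, tri x y z = - tri y x z
  preLie₁ : ∀ x1 x2 x3 x4 x5,
    tri x1 x2 (tri x3 x4 x5) =
      tri (cbr tri x1 x2 x3) x4 x5 + tri x3 (cbr tri x1 x2 x4) x5 + tri x3 x4 (tri x1 x2 x5)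
  preLie₂ : ∀ x1 x2 x3 x4 x5,
    tri (cbr tri x1 x2 x3) x4 x5 =
      tri x1 x2 (tri x3 x4 x5) + tri x2 x3 (tri x1 x4 x5) + tri x3 x1 (tri x2 x4 x5)

/-- A ternary pre-F-manifold algebra. -/
structure TernaryPreFM (K : Type*) [Field K] (A : Type*) [AddCommGroup A] [Module K A] where
  dia : A →ₗ[K] A →ₗ[K] A
  tri : A →ₗ[K] A →ₗ[K] A →ₗ[K] A
  zinbiel : ∀ x y z, dia x (dia y z) = dia (dia y x) z + dia (dia x y) z
  tri_skew : ∀ x y z, tri x y z = - tri y x z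
  preLie₁ : ∀ x1 x2 x3 x4 x5,
    tri x1 x2 (tri x3 x4 x5) =
      tri (cbr tri x1 x2 x3) x4 x5 + tri x3 (cbr tri x1 x2 x4) x5 + tri x3 x4 (tri x1 x2 x5)
  preLie₂ : ∀ x1 x2 x3 x4 x5,
    tri (cbr tri x1 x2 x3) x4 x5 =
      tri x1 x2 (tri x3 x4 x5) + tri x2 x3 (tri x1 x4 x5) + tri x3 x1 (tri x2 x4 x5)
  pf1 : ∀ x1 x2 x3 x4 x5,
    F1 dia tri (sym dia x1 x2) x3 x4 x5 =
      dia x1 (F1 dia tri x2 x3 x4 x5) + dia x2 (F1 dia tri x1 x3 x4 x5)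
  pf2 : ∀ x1 x2 x3 x4 x5,
    F2 dia tri (sym dia x1 x2) x3 x4 x5 =
      dia x1 (F2 dia tri x2 x3 x4 x5) + dia x2 (F2 dia tri x1 x3 x4 x5)
  pf3 : ∀ x1 x2 x3 x4 x5,
    dia (Lpre dia tri x1 x2 x3 x4) x5 =
      F2 dia tri x2 x3 x4 (dia x1 x5) - dia x1 (F2 dia tri x2 x3 x4 x5)

/-- A ternary pre-Nambu–Poisson algebra. -/
structure TernaryPreNP (K : Type*) [Field K] (A : Type*) [AddCommGroup A] [Module K A] where
  dia : A →ₗ[K] A →ₗ[K] A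
  tri : A →ₗ[K] A →ₗ[K] A →ₗ[K] A
  zinbiel : ∀ x y z, dia x (dia y z) = dia (dia y x) z + dia (dia x y) z
  tri_skew : ∀ x y z, tri x y z = - tri y x z
  preLie₁ : ∀ x1 x2 x3 x4 x5,
    tri x1 x2 (tri x3 x4 x5) =
      tri (cbr tri x1 x2 x3) x4 x5 + tri x3 (cbr tri x1 x2 x4) x5 + tri x3 x4 (tri x1 x2 x5)
  preLie₂ : ∀ x1 x2 x3 x4 x5,
    tri (cbr tri x1 x2 x3) x4 x5 =
      tri x1 x2 (tri x3 x4 x5) + tri x2 x3 (tri x1 x4 x5) + tri x3 x1 (tri x2 x4 x5)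
  np1 : ∀ x1 x2 x3 x4,
    tri x1 x2 (dia x3 x4) = dia x3 (tri x1 x2 x4) + dia (cbr tri x1 x2 x3) x4
  np2 : ∀ x1 x2 x3 x4,
    tri x1 (sym dia x2 x3) x4 = dia x3 (tri x1 x2 x4) + dia x2 (tri x1 x3 x4)

end Pre

/-- The coherence map `K(x,y,z,u) = [x,y,z·u] + [x,z,u·y] + [x,u,y·z]`. -/
def kmap {K : Type*} [Field K] {A : Type*} [AddCommGroup A] [Module K A]
    (T : TernaryFM K A) (x y z u : A) : A :=
  T.br x y (T.mul z u) + T.br x z (T.mul u y) + T.br x u (T.mul y z)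

section SD

variable {K : Type*} [Field K] {A V : Type*} [AddCommGroup A] [Module K A]
  [AddCommGroup V] [Module K V]

/-- Semidirect product multiplication on `A × V`. -/
def sdMul (T : TernaryFM K A) (μ : A →ₗ[K] V →ₗ[K] V) (p q : A × V) : A × V :=
  (T.mul p.1 q.1, μ p.1 q.2 + μ q.1 p.2)

/-- Semidirect product ternary bracket on `A × V`. -/
def sdBr (T : TernaryFM K A) (ρ : A →ₗ[K] A →ₗ[K] V →ₗ[K] V) (p q r : A × V) : A × V :=
  (T.br p.1 q.1 r.1, ρ p.1 q.1 r.2 - ρ p.1 r.1 q.2 + ρ q.1 r.1 p.2)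

/-- The Nijenhuis operator `N_T(x+u) = Tu` on `A × V`. -/
def nT (Tm : V →ₗ[K] A) (p : A × V) : A × V := (Tm p.2, 0)

end SD

/-! Applying the representation axioms to elements `T u` gives the 3-pre-Lie identities for
`{u,v,w} = ρ(Tu,Tv)w`: the Rota–Baxter identity says exactly that `T` carries the cyclic sum
`[u,v,w]^C` to `[Tu,Tv,Tw]`, so every bracket occurring in the axioms becomes a cyclic sum. -/

section BracketRep

variable {R : Type*} [CommRing R] {A V : Type*} [AddCommGroup A] [Module R A]
  [AddCommGroup V] [Module R V]

/-- `ρ` satisfies the axioms of a representation of a 3-Lie algebra with bracket `b`: the analogue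
of `Is3LieRep` for an arbitrary ternary operation `b`. -/
structure IsBracketRep (b : A → A → A → A) (ρ : A →ₗ[R] A →ₗ[R] V →ₗ[R] V) : Prop where
  skew : ∀ x y, ρ x y = -ρ y x
  commutator : ∀ x1 x2 x3 x4,
    ρ x1 x2 ∘ₗ ρ x3 x4 - ρ x3 x4 ∘ₗ ρ x1 x2 = ρ (b x1 x2 x3) x4 - ρ (b x1 x2 x4) x3
  bracket : ∀ x1 x2 x3 x4,
    ρ (b x1 x2 x3) x4 = ρ x1 x2 ∘ₗ ρ x3 x4 + ρ x2 x3 ∘ₗ ρ x1 x4 + ρ x3 x1 ∘ₗ ρ x2 x4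

/-- `T` is a relative Rota–Baxter operator for the ternary operation `b` with respect to `ρ`: the
analogue of the second condition of `IsRelRB`. -/
def IsBracketRelRB (b : A → A → A → A) (ρ : A →ₗ[R] A →ₗ[R] V →ₗ[R] V) (T : V →ₗ[R] A) : Prop :=
  ∀ u v w, b (T u) (T v) (T w) = T (ρ (T u) (T v) w + ρ (T v) (T w) u + ρ (T w) (T u) v)

/-- The operation `{u,v,w} = ρ(Tu,Tv)w` induced on `V` by a linear map `T : V → A`. -/
def inducedTri (ρ : A →ₗ[R] A →ₗ[R] V →ₗ[R] V) (T : V →ₗ[R] A) : V →ₗ[R] V →ₗ[R] V →ₗ[R] V :=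
  ρ.compl₁₂ T T

theorem inducedTri_apply (ρ : A →ₗ[R] A →ₗ[R] V →ₗ[R] V) (T : V →ₗ[R] A) (u v w : V) :
    inducedTri ρ T u v w = ρ (T u) (T v) w :=
  rfl

namespace IsBracketRep

variable {b : A → A → A → A} {ρ : A →ₗ[R] A →ₗ[R] V →ₗ[R] V}

theorem skew_apply (hρ : IsBracketRep b ρ) (x y : A) (v : V) : ρ x y v = -ρ y x v := by
  rw [hρ.skew x y, LinearMap.neg_apply]

theorem apply_apply (hρ : IsBracketRep b ρ) (x1 x2 x3 x4 : A) (v : V) :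
    ρ x1 x2 (ρ x3 x4 v) =
      ρ (b x1 x2 x3) x4 v + ρ x3 (b x1 x2 x4) v + ρ x3 x4 (ρ x1 x2 v) := by
  have hcomm : ρ x1 x2 (ρ x3 x4 v) - ρ x3 x4 (ρ x1 x2 v) =
      ρ (b x1 x2 x3) x4 v - ρ (b x1 x2 x4) x3 v :=
    LinearMap.congr_fun (hρ.commutator x1 x2 x3 x4) v
  rw [hρ.skew_apply x3 (b x1 x2 x4), ← sub_eq_add_neg, ← hcomm, sub_add_cancel]

theorem bracket_apply (hρ : IsBracketRep b ρ) (x1 x2 x3 x4 : A) (v : V) :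
    ρ (b x1 x2 x3) x4 v =
      ρ x1 x2 (ρ x3 x4 v) + ρ x2 x3 (ρ x1 x4 v) + ρ x3 x1 (ρ x2 x4 v) :=
  LinearMap.congr_fun (hρ.bracket x1 x2 x3 x4) v

end IsBracketRep

end BracketRep

section InducedThreePreLie

variable {K : Type*} [Field K] {A V : Type*} [AddCommGroup A] [Module K A]
  [AddCommGroup V] [Module K V] {b : A → A → A → A} {ρ : A →ₗ[K] A →ₗ[K] V →ₗ[K] V}
  {T : V →ₗ[K] A}

theorem IsBracketRelRB.map_cbr (hT : IsBracketRelRB b ρ T) (u v w : V) :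
    T (cbr (inducedTri ρ T) u v w) = b (T u) (T v) (T w) :=
  (hT u v w).symm

/-- The 3-pre-Lie algebra structure on `V` induced by a relative Rota–Baxter operator. -/
def IsBracketRelRB.threePreLie (hT : IsBracketRelRB b ρ T) (hρ : IsBracketRep b ρ) :
    ThreePreLie K V where
  tri := inducedTri ρ T
  tri_skew u v := hρ.skew_apply (T u) (T v)
  preLie₁ u1 u2 u3 u4 u5 := by
    simp only [inducedTri_apply, hT.map_cbr]
    exact hρ.apply_apply (T u1) (T u2) (T u3) (T u4) u5
  preLie₂ u1 u2 u3 u4 u5 := by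
    simp only [inducedTri_apply, hT.map_cbr]
    exact hρ.bracket_apply (T u1) (T u2) (T u3) (T u4) u5

theorem stmt12_general (hρ : IsBracketRep b ρ) (hT : IsBracketRelRB b ρ T) :
    ∃ P : ThreePreLie K V, ∀ u v w, P.tri u v w = ρ (T u) (T v) w :=
  ⟨hT.threePreLie hρ, inducedTri_apply ρ T⟩

end InducedThreePreLie

/-- a relative Rota–Baxter operator on a 3-Lie algebra induces a
3-pre-Lie structure `{u,v,w} = ρ(Tu,Tv)w`. -/
theorem stmt12 {K : Type*} [Field K] [CharZero K]
    {A V : Type*} [AddCommGroup A] [Module K A] [AddCommGroup V] [Module K V]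
    (b : A →ₗ[K] A →ₗ[K] A →ₗ[K] A)
    (hskew₁₂ : ∀ x y z, b x y z = - b y x z)
    (hskew₂₃ : ∀ x y z, b x y z = - b x z y)
    (hfund : ∀ x1 x2 x3 x4 x5,
      b x1 x2 (b x3 x4 x5) =
        b (b x1 x2 x3) x4 x5 + b x3 (b x1 x2 x4) x5 + b x3 x4 (b x1 x2 x5))
    (ρ : A →ₗ[K] A →ₗ[K] V →ₗ[K] V)
    (hρskew : ∀ x y, ρ x y = - ρ y x)
    (hρ1 : ∀ x1 x2 x3 x4,
      ρ x1 x2 ∘ₗ ρ x3 x4 - ρ x3 x4 ∘ₗ ρ x1 x2 = ρ (b x1 x2 x3) x4 - ρ (b x1 x2 x4) x3)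
    (hρ2 : ∀ x1 x2 x3 x4,
      ρ (b x1 x2 x3) x4 = ρ x1 x2 ∘ₗ ρ x3 x4 + ρ x2 x3 ∘ₗ ρ x1 x4 + ρ x3 x1 ∘ₗ ρ x2 x4)
    (Tm : V →ₗ[K] A)
    (hrb : ∀ u v w, b (Tm u) (Tm v) (Tm w) =
      Tm (ρ (Tm u) (Tm v) w + ρ (Tm v) (Tm w) u + ρ (Tm w) (Tm u) v)) :
    ∃ P : ThreePreLie K V, ∀ u v w, P.tri u v w = ρ (Tm u) (Tm v) w := by
  exact stmt12_general (b := fun x y z => b x y z) ⟨hρskew, hρ1, hρ2⟩ hrb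
end

section
/- Let (A,·,[·,·,·]) be a ternary F-manifold algebra. There exists a ternary pre-F-manifold algebra structure (⋄,{·,·,·}) on A whose sub-adjacent ternary F-manifold algebra is exactly (A,·,[·,·,·]) (i.e. x⋄y + y⋄x = x·y and {x,y,z} + {y,z,x} + {z,x,y} = [x,y,z] for all x,y,z ∈ A) if and only if there exists a representation (V;ρ,μ) of A and an invertible relative Rota–Baxter operator T : V → A on A with respect to (V;ρ,μ). -/
open TensorProduct

universe u

/-!
The identity of `A` is a relative Rota–Baxter operator with respect to `(A; {·,·,-}, ⋄)` precisely
when `⋄` and `{·,·,·}` are compatible with `·` and `[·,·,·]`, and under this compatibility the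
axioms of a ternary pre-F-manifold algebra amount to those of a representation on `A` itself. An
invertible relative Rota–Baxter operator `V → A` reduces to this case: transporting the
representation from `V` to `A` along it turns it into the identity.
-/

section Regular

variable {K : Type*} [Field K] {A : Type*} [AddCommGroup A] [Module K A]
  {T : TernaryFM K A} {d : A →ₗ[K] A →ₗ[K] A} {t : A →ₗ[K] A →ₗ[K] A →ₗ[K] A}

theorem isRelRB_id_iff :
    IsRelRB T t d LinearMap.id ↔
      (∀ x y, sym d x y = T.mul x y) ∧ ∀ x y z, cbr t x y z = T.br x y z := by
  simp only [IsRelRB, sym, cbr, LinearMap.id_apply, eq_comm]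

theorem F1_eq_L1 (hbr : ∀ x y z, cbr t x y z = T.br x y z) (x y z w : A) :
    F1 d t x y z w = L1 T t d x y z w := by
  simp only [F1, L1, hbr]

theorem F2_eq_L2 (hmul : ∀ x y, sym d x y = T.mul x y) (x y z w : A) :
    F2 d t x y z w = L2 T t d x y z w := by
  simp only [F2, L2, hmul]

theorem Lpre_eq_leib3 (hmul : ∀ x y, sym d x y = T.mul x y)
    (hbr : ∀ x y z, cbr t x y z = T.br x y z) (x y z w : A) :
    Lpre d t x y z w = leib3 T.mul T.br x y z w := by
  simp only [Lpre, leib3, hmul, hbr]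

theorem isAssocRep_iff_zinbiel (hmul : ∀ x y, sym d x y = T.mul x y) :
    IsAssocRep T d ↔ ∀ x y z, d x (d y z) = d (d y x) z + d (d x y) z := by
  have dia_mul (x y z : A) : d (T.mul x y) z = d (d y x) z + d (d x y) z := by
    rw [← hmul, sym, map_add, LinearMap.add_apply, add_comm]
  simp only [IsAssocRep, LinearMap.ext_iff, LinearMap.comp_apply, dia_mul, eq_comm]

theorem is3LieRep_iff_preLie (hbr : ∀ x y z, cbr t x y z = T.br x y z) :
    Is3LieRep T t ↔
      (∀ x y z, t x y z = -t y x z) ∧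
      (∀ x1 x2 x3 x4 x5, t x1 x2 (t x3 x4 x5) =
        t (cbr t x1 x2 x3) x4 x5 + t x3 (cbr t x1 x2 x4) x5 + t x3 x4 (t x1 x2 x5)) ∧
      (∀ x1 x2 x3 x4 x5, t (cbr t x1 x2 x3) x4 x5 =
        t x1 x2 (t x3 x4 x5) + t x2 x3 (t x1 x4 x5) + t x3 x1 (t x2 x4 x5)) := by
  simp only [Is3LieRep, LinearMap.ext_iff, LinearMap.neg_apply, LinearMap.sub_apply,
    LinearMap.add_apply, LinearMap.comp_apply, hbr]
  refine and_congr_right fun skew => and_congr_left' ?_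
  refine forall₅_congr fun x1 x2 x3 x4 x5 => ?_
  rw [skew x3 (T.br x1 x2 x4), ← sub_eq_add_neg, sub_eq_iff_eq_add]

theorem TernaryPreFM.isFMRep (P : TernaryPreFM K A) (hmul : ∀ x y, sym P.dia x y = T.mul x y)
    (hbr : ∀ x y z, cbr P.tri x y z = T.br x y z) : IsFMRep T P.tri P.dia := by
  refine ⟨(is3LieRep_iff_preLie hbr).2 ⟨P.tri_skew, P.preLie₁, P.preLie₂⟩,
    (isAssocRep_iff_zinbiel hmul).2 P.zinbiel, ?_, ?_, ?_⟩
  · simpa only [F1_eq_L1 hbr, hmul] using P.pf1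
  · simpa only [F2_eq_L2 hmul, hmul] using P.pf2
  · simpa only [Lpre_eq_leib3 hmul hbr, F2_eq_L2 hmul] using P.pf3

/-- The ternary pre-F-manifold algebra whose operations are a representation of `T` on `A` itself,
compatible with the product and bracket of `T`: the converse of `TernaryPreFM.isFMRep`. -/
def TernaryPreFM.ofIsFMRep (h : IsFMRep T t d) (hmul : ∀ x y, sym d x y = T.mul x y)
    (hbr : ∀ x y z, cbr t x y z = T.br x y z) : TernaryPreFM K A where
  dia := d
  tri := t
  zinbiel := (isAssocRep_iff_zinbiel hmul).1 h.2.1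
  tri_skew := ((is3LieRep_iff_preLie hbr).1 h.1).1
  preLie₁ := ((is3LieRep_iff_preLie hbr).1 h.1).2.1
  preLie₂ := ((is3LieRep_iff_preLie hbr).1 h.1).2.2
  pf1 := by simpa only [F1_eq_L1 hbr, hmul] using h.2.2.1
  pf2 := by simpa only [F2_eq_L2 hmul, hmul] using h.2.2.2.1
  pf3 := by simpa only [Lpre_eq_leib3 hmul hbr, F2_eq_L2 hmul] using h.2.2.2.2

end Regular

section Transport

variable {K : Type*} [Field K] {A V W : Type*} [AddCommGroup A] [Module K A]
  [AddCommGroup V] [Module K V] [AddCommGroup W] [Module K W]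
  {T : TernaryFM K A} {ρ : A →ₗ[K] A →ₗ[K] V →ₗ[K] V} {μ : A →ₗ[K] V →ₗ[K] V}

/-- The action `μ` on `V` of the commutative algebra, transported to `W` along `e`. -/
def conjMul (e : V ≃ₗ[K] W) (μ : A →ₗ[K] V →ₗ[K] V) : A →ₗ[K] W →ₗ[K] W :=
  e.conj.toLinearMap ∘ₗ μ

/-- The action `ρ` on `V` of the 3-Lie algebra, transported to `W` along `e`. -/
def conjBr (e : V ≃ₗ[K] W) (ρ : A →ₗ[K] A →ₗ[K] V →ₗ[K] V) : A →ₗ[K] A →ₗ[K] W →ₗ[K] W :=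
  ρ.compr₂ e.conj.toLinearMap

theorem conjMul_apply (e : V ≃ₗ[K] W) (x : A) : conjMul e μ x = e.conj (μ x) := rfl

theorem conjBr_apply (e : V ≃ₗ[K] W) (x y : A) : conjBr e ρ x y = e.conj (ρ x y) := rfl

theorem conjMul_apply_apply (e : V ≃ₗ[K] W) (x : A) (u : V) :
    conjMul e μ x (e u) = e (μ x u) := by
  rw [conjMul_apply, LinearEquiv.conj_apply_apply, e.symm_apply_apply]

theorem conjBr_apply_apply (e : V ≃ₗ[K] W) (x y : A) (u : V) :
    conjBr e ρ x y (e u) = e (ρ x y u) := by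
  rw [conjBr_apply, LinearEquiv.conj_apply_apply, e.symm_apply_apply]

theorem L1_conj (e : V ≃ₗ[K] W) (x y z : A) (u : V) :
    L1 T (conjBr e ρ) (conjMul e μ) x y z (e u) = e (L1 T ρ μ x y z u) := by
  simp only [L1, conjMul_apply_apply, conjBr_apply_apply, map_sub]

theorem L2_conj (e : V ≃ₗ[K] W) (x y z : A) (u : V) :
    L2 T (conjBr e ρ) (conjMul e μ) x y z (e u) = e (L2 T ρ μ x y z u) := by
  simp only [L2, conjMul_apply_apply, conjBr_apply_apply, map_sub, map_add]

theorem Is3LieRep.conj (h : Is3LieRep T ρ) (e : V ≃ₗ[K] W) : Is3LieRep T (conjBr e ρ) := by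
  obtain ⟨skew, commutator, bracket⟩ := h
  simp only [Is3LieRep, conjBr_apply, ← LinearEquiv.conj_comp, ← map_neg e.conj,
    ← map_sub e.conj, ← map_add e.conj]
  exact ⟨fun x y => congrArg e.conj (skew x y),
    fun x1 x2 x3 x4 => congrArg e.conj (commutator x1 x2 x3 x4),
    fun x1 x2 x3 x4 => congrArg e.conj (bracket x1 x2 x3 x4)⟩

theorem IsAssocRep.conj (h : IsAssocRep T μ) (e : V ≃ₗ[K] W) : IsAssocRep T (conjMul e μ) := by
  intro x y
  simp only [conjMul_apply, h x y, LinearEquiv.conj_comp]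

theorem IsFMRep.conj (h : IsFMRep T ρ μ) (e : V ≃ₗ[K] W) :
    IsFMRep T (conjBr e ρ) (conjMul e μ) := by
  obtain ⟨lie, assoc, L1_mul, L2_mul, action_leib3⟩ := h
  simp only [IsFMRep, e.surjective.forall, L1_conj, L2_conj, conjMul_apply_apply, ← map_add,
    ← map_sub, e.injective.eq_iff]
  exact ⟨lie.conj e, assoc.conj e, L1_mul, L2_mul, action_leib3⟩

theorem IsRelRB.conj {Tm : V →ₗ[K] A} (h : IsRelRB T ρ μ Tm) (e : V ≃ₗ[K] W) :
    IsRelRB T (conjBr e ρ) (conjMul e μ) (Tm ∘ₗ e.symm) := by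
  simpa only [IsRelRB, e.surjective.forall, LinearMap.comp_apply, LinearEquiv.coe_coe,
    e.symm_apply_apply, conjMul_apply_apply, conjBr_apply_apply, ← map_add] using h

theorem IsRelRB.exists_ternaryPreFM {Tm : V →ₗ[K] A} (hRB : IsRelRB T ρ μ Tm)
    (hrep : IsFMRep T ρ μ) (hbij : Function.Bijective Tm) :
    ∃ P : TernaryPreFM K A,
      (∀ x y, sym P.dia x y = T.mul x y) ∧ ∀ x y z, cbr P.tri x y z = T.br x y z := by
  let e : V ≃ₗ[K] A := LinearEquiv.ofBijective Tm hbij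
  have operator_eq_id : Tm ∘ₗ e.symm = LinearMap.id := LinearMap.ext e.apply_symm_apply
  have hid : IsRelRB T (conjBr e ρ) (conjMul e μ) LinearMap.id := operator_eq_id ▸ hRB.conj e
  obtain ⟨hmul, hbr⟩ := isRelRB_id_iff.1 hid
  exact ⟨.ofIsFMRep (hrep.conj e) hmul hbr, hmul, hbr⟩

end Transport

theorem stmt15_general {K : Type*} [Field K]
    {A : Type u} [AddCommGroup A] [Module K A] (T : TernaryFM K A) :
    (∃ P : TernaryPreFM K A,
      (∀ x y, sym P.dia x y = T.mul x y) ∧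
      (∀ x y z, cbr P.tri x y z = T.br x y z)) ↔
    (∃ (V : ModuleCat.{u} K) (ρ : A →ₗ[K] A →ₗ[K] V →ₗ[K] V)
        (μ : A →ₗ[K] V →ₗ[K] V) (Tm : V →ₗ[K] A),
      IsFMRep T ρ μ ∧ IsRelRB T ρ μ Tm ∧ Function.Bijective Tm) := by
  constructor
  · rintro ⟨P, hmul, hbr⟩
    exact ⟨ModuleCat.of K A, P.tri, P.dia, LinearMap.id, P.isFMRep hmul hbr,
      isRelRB_id_iff.2 ⟨hmul, hbr⟩, Function.bijective_id⟩
  · rintro ⟨V, ρ, μ, Tm, hrep, hRB, hbij⟩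
    exact hRB.exists_ternaryPreFM hrep hbij

/-- a ternary F-manifold algebra admits a compatible ternary
pre-F-manifold algebra structure iff there is an invertible relative
Rota–Baxter operator with respect to some representation. -/
theorem stmt15 {K : Type*} [Field K] [CharZero K]
    {A : Type u} [AddCommGroup A] [Module K A] (T : TernaryFM K A) :
    (∃ P : TernaryPreFM K A,
      (∀ x y, sym P.dia x y = T.mul x y) ∧
      (∀ x y z, cbr P.tri x y z = T.br x y z)) ↔
    (∃ (V : ModuleCat.{u} K) (ρ : A →ₗ[K] A →ₗ[K] V →ₗ[K] V)
        (μ : A →ₗ[K] V →ₗ[K] V) (Tm : V →ₗ[K] A),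
      IsFMRep T ρ μ ∧ IsRelRB T ρ μ Tm ∧ Function.Bijective Tm) :=
  stmt15_general T
end

section
/- Let (A,·,[·,·,·]) be a ternary F-manifold algebra and let N : A → A be a Nijenhuis operator, i.e. a linear map satisfying Nx·Ny = N(Nx·y + x·Ny − N(x·y)) and [Nx,Ny,Nz] = N([Nx,Ny,z] + [Nx,y,Nz] + [x,Ny,Nz] − N[Nx,y,z] − N[x,Ny,z] − N[x,y,Nz] + N²[x,y,z]) for all x,y,z ∈ A. Define the deformed products x ·_N y = Nx·y + x·Ny − N(x·y) and [x,y,z]_N = [Nx,Ny,z] + [Nx,y,Nz] + [x,Ny,Nz] − N[Nx,y,z] − N[x,Ny,z] − N[x,y,Nz] + N²[x,y,z]. Then (A, ·_N, [·,·,·]_N) is a ternary F-manifold algebra. -/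
open TensorProduct

/-!
The identity satisfied by `N` says that `N` is a homomorphism from the deformed operations to the
original ones, so if `N` is injective the deformed operations inherit every identity. In general,
pass to `A[X] = A ⊗ K[X]`. The operator `N + X` is again Nijenhuis, because multiplication by `X`
commutes with all the operations, and it is injective, because it raises degrees. Hence the
operations on `A[X]` deformed by `N + X` form a ternary F-manifold algebra, and setting `X = 0`
maps it onto `A` with the operations deformed by `N`.
-/

open Polynomial

section Deformation

variable {R : Type*} [CommRing R] {M : Type*} [AddCommGroup M] [Module R M]

/-- The deformed product `x ·_N y = Nx·y + x·Ny − N(x·y)`. -/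
def deformedMul (m : M →ₗ[R] M →ₗ[R] M) (N : M →ₗ[R] M) : M →ₗ[R] M →ₗ[R] M :=
  m ∘ₗ N + m.compl₂ N - m.compr₂ N

/-- The deformed ternary bracket `[x, y, z]_N`: the sum over all ways of applying `N` to two of the
arguments, minus `N` of the sum over all ways of applying it to one, plus `N²[x, y, z]`. -/
def deformedBr (b : M →ₗ[R] M →ₗ[R] M →ₗ[R] M) (N : M →ₗ[R] M) :
    M →ₗ[R] M →ₗ[R] M →ₗ[R] M :=
  b.compl₁₂ N N + (b ∘ₗ N + b.compl₂ N).compr₂ (LinearMap.lcomp R M N)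
    - (b ∘ₗ N + b.compl₂ N + b.compr₂ (LinearMap.lcomp R M N)).compr₂ (LinearMap.compRight R N)
    + b.compr₂ (LinearMap.compRight R (N ∘ₗ N))

theorem deformedMul_apply (m : M →ₗ[R] M →ₗ[R] M) (N : M →ₗ[R] M) (x y : M) :
    deformedMul m N x y = m (N x) y + m x (N y) - N (m x y) := by
  simp [deformedMul]

theorem deformedBr_apply (b : M →ₗ[R] M →ₗ[R] M →ₗ[R] M) (N : M →ₗ[R] M) (x y z : M) :
    deformedBr b N x y z =
      b (N x) (N y) z + b (N x) y (N z) + b x (N y) (N z)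
        - N (b (N x) y z) - N (b x (N y) z) - N (b x y (N z))
        + N (N (b x y z)) := by
  simp only [deformedBr, LinearMap.add_apply, LinearMap.sub_apply, LinearMap.compl₁₂_apply,
    LinearMap.compr₂_apply, LinearMap.comp_apply, LinearMap.compl₂_apply, LinearMap.lcomp_apply,
    LinearMap.compRight_apply, map_add]
  abel

variable {M' : Type*} [AddCommGroup M'] [Module R M'] {N : M →ₗ[R] M} {N' : M' →ₗ[R] M'}
  {φ : M →ₗ[R] M'}

theorem map_deformedMul {m : M →ₗ[R] M →ₗ[R] M} {m' : M' →ₗ[R] M' →ₗ[R] M'}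
    (hm : ∀ x y, φ (m x y) = m' (φ x) (φ y)) (hN : ∀ x, φ (N x) = N' (φ x)) (x y : M) :
    φ (deformedMul m N x y) = deformedMul m' N' (φ x) (φ y) := by
  simp only [deformedMul_apply, map_add, map_sub, hm, hN]

theorem map_deformedBr {b : M →ₗ[R] M →ₗ[R] M →ₗ[R] M} {b' : M' →ₗ[R] M' →ₗ[R] M' →ₗ[R] M'}
    (hb : ∀ x y z, φ (b x y z) = b' (φ x) (φ y) (φ z)) (hN : ∀ x, φ (N x) = N' (φ x))
    (x y z : M) : φ (deformedBr b N x y z) = deformedBr b' N' (φ x) (φ y) (φ z) := by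
  simp only [deformedBr_apply, map_add, map_sub, hb, hN]

end Deformation

section TensorInduction

variable {R M P : Type*} [CommSemiring R] [AddCommMonoid M] [Module R M] [AddCommMonoid P]
  [Module R P]

@[elab_as_elim]
theorem tmul_induction {p : M ⊗[R] P → Prop} (add : ∀ x x', p x → p x' → p (x + x'))
    (tmul : ∀ a r, p (a ⊗ₜ r)) (x : M ⊗[R] P) : p x :=
  x.induction_on (by simpa only [TensorProduct.zero_tmul] using tmul 0 0) tmul add

@[elab_as_elim]
theorem tmul_induction₂ {p : M ⊗[R] P → M ⊗[R] P → Prop}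
    (add_left : ∀ x x' y, p x y → p x' y → p (x + x') y)
    (add_right : ∀ x y y', p x y → p x y' → p x (y + y'))
    (tmul : ∀ a r b s, p (a ⊗ₜ r) (b ⊗ₜ s)) (x y : M ⊗[R] P) : p x y := by
  induction x using tmul_induction with
  | add x x' hx hx' => exact add_left x x' y hx hx'
  | tmul a r =>
    induction y using tmul_induction with
    | add y y' hy hy' => exact add_right _ y y' hy hy'
    | tmul b s => exact tmul a r b s

@[elab_as_elim]
theorem tmul_induction₃ {p : M ⊗[R] P → M ⊗[R] P → M ⊗[R] P → Prop}
    (add_left : ∀ x x' y z, p x y z → p x' y z → p (x + x') y z)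
    (add_middle : ∀ x y y' z, p x y z → p x y' z → p x (y + y') z)
    (add_right : ∀ x y z z', p x y z → p x y z' → p x y (z + z'))
    (tmul : ∀ a r b s c t, p (a ⊗ₜ r) (b ⊗ₜ s) (c ⊗ₜ t)) (x y z : M ⊗[R] P) : p x y z := by
  induction x, y using tmul_induction₂ with
  | add_left x x' y hx hx' => exact add_left x x' y z hx hx'
  | add_right x y y' hy hy' => exact add_middle x y y' z hy hy'
  | tmul a r b s =>
    induction z using tmul_induction with
    | add z z' hz hz' => exact add_right _ _ z z' hz hz'
    | tmul c t => exact tmul a r b s c t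

end TensorInduction

section AddX

variable {R : Type*} [CommRing R] {M : Type*} [AddCommGroup M] [Module R M]

/-- The operator `N + X` on `M[X] = M ⊗ R[X]`. -/
noncomputable def addX (N : M →ₗ[R] M) : M ⊗[R] R[X] →ₗ[R] M ⊗[R] R[X] :=
  N.rTensor R[X] + (LinearMap.mulLeft R X).lTensor M

/-- The `n`-th coefficient of an element of `M[X] = M ⊗ R[X]`. -/
noncomputable def tensorCoeff (n : ℕ) : M ⊗[R] R[X] →ₗ[R] M :=
  TensorProduct.rid R M ∘ₗ (lcoeff R n).lTensor M

theorem tensorCoeff_eq_equivFinsupp (f : M ⊗[R] R[X]) (n : ℕ) :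
    tensorCoeff n f = TensorProduct.equivFinsuppOfBasisRight (basisMonomials R) f n := by
  rw [TensorProduct.equivFinsuppOfBasisRight_apply]
  rfl

theorem eq_zero_of_forall_tensorCoeff_eq_zero {f : M ⊗[R] R[X]}
    (hf : ∀ n, tensorCoeff n f = 0) : f = 0 := by
  rw [← (TensorProduct.equivFinsuppOfBasisRight (basisMonomials R)).map_eq_zero_iff]
  ext n
  rw [← tensorCoeff_eq_equivFinsupp, hf, Finsupp.zero_apply]

theorem exists_forall_le_tensorCoeff_eq_zero (f : M ⊗[R] R[X]) :
    ∃ d, ∀ n, d ≤ n → tensorCoeff n f = 0 := by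
  obtain ⟨d, hd⟩ := (TensorProduct.equivFinsuppOfBasisRight
    (basisMonomials R) f).support.exists_nat_subset_range
  refine ⟨d, fun n hn => ?_⟩
  rw [tensorCoeff_eq_equivFinsupp, ← Finsupp.notMem_support_iff]
  exact fun hmem => (Finset.mem_range.1 (hd hmem)).not_ge hn

theorem tensorCoeff_succ_addX (N : M →ₗ[R] M) (n : ℕ) (f : M ⊗[R] R[X]) :
    tensorCoeff (n + 1) (addX N f) = N (tensorCoeff (n + 1) f) + tensorCoeff n f := by
  induction f using tmul_induction with
  | tmul x p => simp [tensorCoeff, addX]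
  | add f g hf hg =>
    simp only [map_add, hf, hg]
    abel

theorem addX_injective (N : M →ₗ[R] M) : Function.Injective (addX N) := by
  refine (injective_iff_map_eq_zero _).2 fun f hf => eq_zero_of_forall_tensorCoeff_eq_zero ?_
  have coeff_eq (n : ℕ) : tensorCoeff n f = -N (tensorCoeff (n + 1) f) := by
    rw [eq_neg_iff_add_eq_zero, add_comm, ← tensorCoeff_succ_addX, hf, map_zero]
  obtain ⟨d, hd⟩ := exists_forall_le_tensorCoeff_eq_zero f
  intro n
  rcases le_total d n with hdn | hnd
  · exact hd n hdn
  · induction hnd using Nat.decreasingInduction with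
    | self => exact hd d le_rfl
    | of_succ k _ ih => rw [coeff_eq, ih, map_zero, neg_zero]

/-- Evaluation at `X = 0`, as a map `M[X] = M ⊗ R[X] → M`. -/
noncomputable def evalZero : M ⊗[R] R[X] →ₗ[R] M :=
  TensorProduct.rid R M ∘ₗ (aeval (0 : R)).toLinearMap.lTensor M

theorem evalZero_tmul (x : M) (p : R[X]) : evalZero (x ⊗ₜ[R] p) = p.eval 0 • x := by
  simp [evalZero]

theorem evalZero_surjective : Function.Surjective (evalZero : M ⊗[R] R[X] →ₗ[R] M) :=
  fun x => ⟨x ⊗ₜ 1, by rw [evalZero_tmul, eval_one, one_smul]⟩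

theorem evalZero_addX (N : M →ₗ[R] M) (f : M ⊗[R] R[X]) :
    evalZero (addX N f) = N (evalZero f) := by
  induction f using tmul_induction with
  | tmul x p => simp [addX, evalZero_tmul]
  | add f g hf hg => simp only [map_add, hf, hg]

end AddX

section BaseChangeOperations

variable {k M : Type*} [CommSemiring k] [AddCommMonoid M] [Module k M]
variable (R : Type*) [CommSemiring R] [Algebra k R]

/-- The `R`-bilinear extension to `M ⊗ R` of a product on `M`. -/
noncomputable def baseChangeMul (m : M →ₗ[k] M →ₗ[k] M) :
    M ⊗[k] R →ₗ[k] M ⊗[k] R →ₗ[k] M ⊗[k] R :=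
  TensorProduct.map₂ m (LinearMap.mul k R)

/-- The `R`-trilinear extension to `M ⊗ R` of a ternary bracket on `M`. -/
noncomputable def baseChangeBr (b : M →ₗ[k] M →ₗ[k] M →ₗ[k] M) :
    M ⊗[k] R →ₗ[k] M ⊗[k] R →ₗ[k] M ⊗[k] R →ₗ[k] M ⊗[k] R :=
  (TensorProduct.map₂ b ((LinearMap.mul k R).compr₂ (LinearMap.mul k R))).compr₂
    (TensorProduct.homTensorHomMap (.id k) M R M R)

variable {R}

theorem baseChangeMul_tmul (m : M →ₗ[k] M →ₗ[k] M) (x y : M) (r s : R) :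
    baseChangeMul R m (x ⊗ₜ r) (y ⊗ₜ s) = m x y ⊗ₜ (r * s) :=
  rfl

theorem baseChangeBr_tmul (b : M →ₗ[k] M →ₗ[k] M →ₗ[k] M) (x y z : M) (r s t : R) :
    baseChangeBr R b (x ⊗ₜ r) (y ⊗ₜ s) (z ⊗ₜ t) = b x y z ⊗ₜ (r * s * t) :=
  rfl

end BaseChangeOperations

section FManifold

variable {K : Type*} [Field K] {A B : Type*} [AddCommGroup A] [Module K A]
  [AddCommGroup B] [Module K B]

theorem map_leib3 {m : A →ₗ[K] A →ₗ[K] A} {b : A →ₗ[K] A →ₗ[K] A →ₗ[K] A}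
    {m' : B →ₗ[K] B →ₗ[K] B} {b' : B →ₗ[K] B →ₗ[K] B →ₗ[K] B} {φ : A →ₗ[K] B}
    (hm : ∀ x y, φ (m x y) = m' (φ x) (φ y))
    (hb : ∀ x y z, φ (b x y z) = b' (φ x) (φ y) (φ z)) (x₁ x₂ x₃ x₄ : A) :
    φ (leib3 m b x₁ x₂ x₃ x₄) = leib3 m' b' (φ x₁) (φ x₂) (φ x₃) (φ x₄) := by
  simp only [leib3, map_sub, hm, hb]

namespace TernaryFM

/-- The operations `m`, `b` on `A` form a ternary F-manifold algebra if an injective linear map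
`φ : A → B` carries them to the operations of one on `B`. -/
def ofInjective (T : TernaryFM K B) (m : A →ₗ[K] A →ₗ[K] A) (b : A →ₗ[K] A →ₗ[K] A →ₗ[K] A)
    (φ : A →ₗ[K] B) (hφ : Function.Injective φ) (hm : ∀ x y, φ (m x y) = T.mul (φ x) (φ y))
    (hb : ∀ x y z, φ (b x y z) = T.br (φ x) (φ y) (φ z)) : TernaryFM K A where
  mul := m
  br := b
  mul_comm x y := hφ <| by simp only [hm, T.mul_comm]
  mul_assoc x y z := hφ <| by simp only [hm, T.mul_assoc]
  br_skew₁₂ x y z := hφ <| by simpa only [map_neg, hb] using T.br_skew₁₂ (φ x) (φ y) (φ z)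
  br_skew₂₃ x y z := hφ <| by simpa only [map_neg, hb] using T.br_skew₂₃ (φ x) (φ y) (φ z)
  fund _ _ _ _ _ := hφ <| by simpa only [map_add, hb] using T.fund _ _ _ _ _
  leib _ _ _ _ _ := hφ <| by
    simpa only [map_add, map_leib3 hm hb, hm] using T.leib _ _ _ _ _

/-- The operations `m`, `b` on `B` form a ternary F-manifold algebra if a surjective linear map
`φ : A → B` carries the operations of one on `A` to them. -/
def ofSurjective (T : TernaryFM K A) (m : B →ₗ[K] B →ₗ[K] B) (b : B →ₗ[K] B →ₗ[K] B →ₗ[K] B)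
    (φ : A →ₗ[K] B) (hφ : Function.Surjective φ) (hm : ∀ x y, φ (T.mul x y) = m (φ x) (φ y))
    (hb : ∀ x y z, φ (T.br x y z) = b (φ x) (φ y) (φ z)) : TernaryFM K B where
  mul := m
  br := b
  mul_comm := hφ.forall₂.2 fun x y => by simp only [← hm, T.mul_comm]
  mul_assoc := hφ.forall₃.2 fun x y z => by simp only [← hm, T.mul_assoc]
  br_skew₁₂ := hφ.forall₃.2 fun x y z => by
    rw [← hb, T.br_skew₁₂, map_neg, hb]
  br_skew₂₃ := hφ.forall₃.2 fun x y z => by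
    rw [← hb, T.br_skew₂₃, map_neg, hb]
  fund := hφ.forall₂.2 fun x₁ x₂ => hφ.forall₃.2 fun x₃ x₄ x₅ => by
    simp only [← hb, T.fund x₁ x₂, map_add]
  leib := hφ.forall₂.2 fun x₁ x₂ => hφ.forall₃.2 fun x₃ x₄ x₅ => by
    simp only [← hm, ← map_leib3 hm hb, T.leib x₁ x₂, map_add]

/-- `N` is a Nijenhuis operator on `T`: it is a homomorphism from the deformed operations to the
original ones. -/
structure IsNijenhuis (T : TernaryFM K A) (N : A →ₗ[K] A) : Prop where
  map_mul : ∀ x y, N (deformedMul T.mul N x y) = T.mul (N x) (N y)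
  map_br : ∀ x y z, N (deformedBr T.br N x y z) = T.br (N x) (N y) (N z)

/-- `S` lies in the centroid of `T`: it can be moved out of every argument of both operations.
By the symmetries of the operations it suffices to ask this for the first argument. -/
structure IsCentroid (T : TernaryFM K A) (S : A →ₗ[K] A) : Prop where
  mul_left : ∀ x y, T.mul (S x) y = S (T.mul x y)
  br_left : ∀ x y z, T.br (S x) y z = S (T.br x y z)

namespace IsCentroid

variable {T : TernaryFM K A} {S : A →ₗ[K] A}

theorem mul_right (hS : T.IsCentroid S) (x y : A) : T.mul x (S y) = S (T.mul x y) := by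
  rw [T.mul_comm, hS.mul_left, T.mul_comm]

theorem br_middle (hS : T.IsCentroid S) (x y z : A) : T.br x (S y) z = S (T.br x y z) := by
  rw [T.br_skew₁₂, hS.br_left, ← map_neg, ← T.br_skew₁₂]

theorem br_right (hS : T.IsCentroid S) (x y z : A) : T.br x y (S z) = S (T.br x y z) := by
  rw [T.br_skew₂₃, hS.br_middle, ← map_neg, ← T.br_skew₂₃]

end IsCentroid

theorem IsNijenhuis.add_isCentroid {T : TernaryFM K A} {N S : A →ₗ[K] A} (hN : T.IsNijenhuis N)
    (hS : T.IsCentroid S) (hNS : ∀ x, N (S x) = S (N x)) : T.IsNijenhuis (N + S) where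
  map_mul x y := by
    simp only [deformedMul_apply, LinearMap.add_apply, map_add, map_sub, hS.mul_left,
      hS.mul_right, hNS, ← hN.map_mul]
    abel
  map_br x y z := by
    simp only [deformedBr_apply, LinearMap.add_apply, map_add, map_sub, hS.br_left,
      hS.br_middle, hS.br_right, hNS, ← hN.map_br]
    abel

section BaseChange

variable {R : Type*} [CommRing R] [Algebra K R]

theorem baseChangeBr_fund (T : TernaryFM K A) (x₁ x₂ x₃ x₄ x₅ : A ⊗[K] R) :
    baseChangeBr R T.br x₁ x₂ (baseChangeBr R T.br x₃ x₄ x₅) =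
      baseChangeBr R T.br (baseChangeBr R T.br x₁ x₂ x₃) x₄ x₅
        + baseChangeBr R T.br x₃ (baseChangeBr R T.br x₁ x₂ x₄) x₅
        + baseChangeBr R T.br x₃ x₄ (baseChangeBr R T.br x₁ x₂ x₅) := by
  induction x₁, x₂ using tmul_induction₂ with
  | tmul a₁ r₁ a₂ r₂ =>
    induction x₃, x₄, x₅ using tmul_induction₃ with
    | tmul a₃ r₃ a₄ r₄ a₅ r₅ =>
      simp only [baseChangeBr_tmul, T.fund a₁ a₂, TensorProduct.add_tmul]
      ring_nf
    | _ => simp only [map_add, LinearMap.add_apply, *]; abel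
  | _ => simp only [map_add, LinearMap.add_apply, *]; abel

theorem leib3_baseChange_tmul (m : A →ₗ[K] A →ₗ[K] A) (b : A →ₗ[K] A →ₗ[K] A →ₗ[K] A)
    (x₁ x₂ x₃ x₄ : A) (r₁ r₂ r₃ r₄ : R) :
    leib3 (baseChangeMul R m) (baseChangeBr R b)
      (x₁ ⊗ₜ r₁) (x₂ ⊗ₜ r₂) (x₃ ⊗ₜ r₃) (x₄ ⊗ₜ r₄) =
      leib3 m b x₁ x₂ x₃ x₄ ⊗ₜ (r₁ * r₂ * r₃ * r₄) := by
  simp only [leib3, baseChangeMul_tmul, baseChangeBr_tmul, TensorProduct.sub_tmul]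
  ring_nf

theorem leib3_baseChangeMul (T : TernaryFM K A) (x₁ x₂ x₃ x₄ x₅ : A ⊗[K] R) :
    leib3 (baseChangeMul R T.mul) (baseChangeBr R T.br) (baseChangeMul R T.mul x₁ x₂) x₃ x₄ x₅ =
      baseChangeMul R T.mul x₁ (leib3 (baseChangeMul R T.mul) (baseChangeBr R T.br) x₂ x₃ x₄ x₅)
        + baseChangeMul R T.mul x₂
          (leib3 (baseChangeMul R T.mul) (baseChangeBr R T.br) x₁ x₃ x₄ x₅) := by
  induction x₁, x₂ using tmul_induction₂ with
  | tmul a₁ r₁ a₂ r₂ =>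
    induction x₃, x₄, x₅ using tmul_induction₃ with
    | tmul a₃ r₃ a₄ r₄ a₅ r₅ =>
      simp only [baseChangeMul_tmul, leib3_baseChange_tmul, T.leib a₁ a₂, TensorProduct.add_tmul]
      ring_nf
    | add_left _ _ _ _ h h' | add_middle _ _ _ _ h h' | add_right _ _ _ _ h h' =>
      simp only [leib3, map_add, map_sub, LinearMap.add_apply] at h h' ⊢
      linear_combination (norm := module) h + h'
  | add_left _ _ _ h h' | add_right _ _ _ h h' =>
    simp only [leib3, map_add, map_sub, LinearMap.add_apply] at h h' ⊢
    linear_combination (norm := module) h + h'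

variable (R) in
/-- The ternary F-manifold algebra `A ⊗ R` obtained from `A` by extension of scalars, regarded as
an algebra over `K`. -/
noncomputable def baseChange (T : TernaryFM K A) : TernaryFM K (A ⊗[K] R) where
  mul := baseChangeMul R T.mul
  br := baseChangeBr R T.br
  mul_comm x y := by
    induction x, y using tmul_induction₂ with
    | tmul a r b s => rw [baseChangeMul_tmul, baseChangeMul_tmul, T.mul_comm, _root_.mul_comm]
    | _ => simp only [map_add, LinearMap.add_apply, *]
  mul_assoc x y z := by
    induction x, y, z using tmul_induction₃ with
    | tmul => simp only [baseChangeMul_tmul, T.mul_assoc, _root_.mul_assoc]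
    | _ => simp only [map_add, LinearMap.add_apply, *]
  br_skew₁₂ x y z := by
    induction x, y, z using tmul_induction₃ with
    | tmul a r b s c t =>
      rw [baseChangeBr_tmul, baseChangeBr_tmul, T.br_skew₁₂, TensorProduct.neg_tmul,
        _root_.mul_comm r s]
    | _ => simp only [map_add, LinearMap.add_apply, neg_add, *]
  br_skew₂₃ x y z := by
    induction x, y, z using tmul_induction₃ with
    | tmul a r b s c t =>
      rw [baseChangeBr_tmul, baseChangeBr_tmul, T.br_skew₂₃, TensorProduct.neg_tmul,
        mul_right_comm]
    | _ => simp only [map_add, LinearMap.add_apply, neg_add, *]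
  fund := baseChangeBr_fund T
  leib := leib3_baseChangeMul T

theorem IsNijenhuis.rTensor {T : TernaryFM K A} {N : A →ₗ[K] A} (hN : T.IsNijenhuis N) :
    (T.baseChange R).IsNijenhuis (N.rTensor R) where
  map_mul x y := by
    induction x, y using tmul_induction₂ with
    | tmul a r b s =>
      simp only [baseChange, deformedMul_apply, LinearMap.rTensor_tmul, baseChangeMul_tmul,
        ← hN.map_mul, TensorProduct.add_tmul, TensorProduct.sub_tmul, map_add, map_sub]
    | _ => simp only [map_add, LinearMap.add_apply, *]
  map_br x y z := by
    induction x, y, z using tmul_induction₃ with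
    | tmul a r b s c t =>
      simp only [baseChange, deformedBr_apply, LinearMap.rTensor_tmul, baseChangeBr_tmul,
        ← hN.map_br, TensorProduct.add_tmul, TensorProduct.sub_tmul, map_add, map_sub]
    | _ => simp only [map_add, LinearMap.add_apply, *]

theorem isCentroid_lTensor_mulLeft (T : TernaryFM K A) (r : R) :
    (T.baseChange R).IsCentroid ((LinearMap.mulLeft K r).lTensor A) where
  mul_left x y := by
    induction x, y using tmul_induction₂ with
    | tmul => simp only [baseChange, LinearMap.lTensor_tmul, LinearMap.mulLeft_apply,
        baseChangeMul_tmul, _root_.mul_assoc]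
    | _ => simp only [map_add, LinearMap.add_apply, *]
  br_left x y z := by
    induction x, y, z using tmul_induction₃ with
    | tmul => simp only [baseChange, LinearMap.lTensor_tmul, LinearMap.mulLeft_apply,
        baseChangeBr_tmul, _root_.mul_assoc]
    | _ => simp only [map_add, LinearMap.add_apply, *]

end BaseChange

theorem evalZero_baseChange_mul (T : TernaryFM K A) (x y : A ⊗[K] K[X]) :
    evalZero ((T.baseChange K[X]).mul x y) = T.mul (evalZero x) (evalZero y) := by
  induction x, y using tmul_induction₂ with
  | tmul a p b q =>
    simp only [baseChange, baseChangeMul_tmul, evalZero_tmul, eval_mul, map_smul,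
      LinearMap.smul_apply]
    module
  | _ => simp only [map_add, LinearMap.add_apply, *]

theorem evalZero_baseChange_br (T : TernaryFM K A) (x y z : A ⊗[K] K[X]) :
    evalZero ((T.baseChange K[X]).br x y z) = T.br (evalZero x) (evalZero y) (evalZero z) := by
  induction x, y, z using tmul_induction₃ with
  | tmul a p b q c r =>
    simp only [baseChange, baseChangeBr_tmul, evalZero_tmul, eval_mul, map_smul,
      LinearMap.smul_apply]
    module
  | _ => simp only [map_add, LinearMap.add_apply, *]

theorem IsNijenhuis.addX {T : TernaryFM K A} {N : A →ₗ[K] A} (hN : T.IsNijenhuis N) :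
    (T.baseChange K[X]).IsNijenhuis (addX N) :=
  hN.rTensor.add_isCentroid (T.isCentroid_lTensor_mulLeft X) fun x => by
    rw [← LinearMap.comp_apply, LinearMap.rTensor_comp_lTensor, ← LinearMap.lTensor_comp_rTensor,
      LinearMap.comp_apply]

/-- The deformation of a ternary F-manifold algebra by an injective Nijenhuis operator. -/
def deformOfInjective (T : TernaryFM K A) {N : A →ₗ[K] A} (hN : T.IsNijenhuis N)
    (hinj : Function.Injective N) : TernaryFM K A :=
  T.ofInjective (deformedMul T.mul N) (deformedBr T.br N) N hinj hN.map_mul hN.map_br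

/-- The deformation of a ternary F-manifold algebra by a Nijenhuis operator `N`, obtained by setting
`X = 0` in the deformation of `A[X]` by `N + X`. -/
noncomputable def deform (T : TernaryFM K A) {N : A →ₗ[K] A} (hN : T.IsNijenhuis N) :
    TernaryFM K A :=
  ((T.baseChange K[X]).deformOfInjective hN.addX (addX_injective N)).ofSurjective
    (deformedMul T.mul N) (deformedBr T.br N) evalZero evalZero_surjective
    (map_deformedMul T.evalZero_baseChange_mul (evalZero_addX N))
    (map_deformedBr T.evalZero_baseChange_br (evalZero_addX N))

end TernaryFM

end FManifold

theorem stmt17_general {K : Type*} [Field K]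
    {A : Type*} [AddCommGroup A] [Module K A]
    (T : TernaryFM K A) (N : A →ₗ[K] A)
    (hN1 : ∀ x y, T.mul (N x) (N y) =
      N (T.mul (N x) y + T.mul x (N y) - N (T.mul x y)))
    (hN2 : ∀ x y z, T.br (N x) (N y) (N z) =
      N (T.br (N x) (N y) z + T.br (N x) y (N z) + T.br x (N y) (N z)
        - N (T.br (N x) y z) - N (T.br x (N y) z) - N (T.br x y (N z))
        + N (N (T.br x y z)))) :
    ∃ S : TernaryFM K A,
      (∀ x y, S.mul x y = T.mul (N x) y + T.mul x (N y) - N (T.mul x y)) ∧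
      (∀ x y z, S.br x y z =
        T.br (N x) (N y) z + T.br (N x) y (N z) + T.br x (N y) (N z)
          - N (T.br (N x) y z) - N (T.br x (N y) z) - N (T.br x y (N z))
          + N (N (T.br x y z))) := by
  have hN : T.IsNijenhuis N :=
    ⟨fun x y => by rw [deformedMul_apply, hN1], fun x y z => by rw [deformedBr_apply, hN2]⟩
  exact ⟨T.deform hN, deformedMul_apply T.mul N, deformedBr_apply T.br N⟩

/-- the products deformed by a Nijenhuis operator again form a
ternary F-manifold algebra. -/
theorem stmt17 {K : Type*} [Field K] [CharZero K]
    {A : Type*} [AddCommGroup A] [Module K A]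
    (T : TernaryFM K A) (N : A →ₗ[K] A)
    (hN1 : ∀ x y, T.mul (N x) (N y) =
      N (T.mul (N x) y + T.mul x (N y) - N (T.mul x y)))
    (hN2 : ∀ x y z, T.br (N x) (N y) (N z) =
      N (T.br (N x) (N y) z + T.br (N x) y (N z) + T.br x (N y) (N z)
        - N (T.br (N x) y z) - N (T.br x (N y) z) - N (T.br x y (N z))
        + N (N (T.br x y z)))) :
    ∃ S : TernaryFM K A,
      (∀ x y, S.mul x y = T.mul (N x) y + T.mul x (N y) - N (T.mul x y)) ∧
      (∀ x y z, S.br x y z =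
        T.br (N x) (N y) z + T.br (N x) y (N z) + T.br x (N y) (N z)
          - N (T.br (N x) y z) - N (T.br x (N y) z) - N (T.br x y (N z))
          + N (N (T.br x y z))) :=
  stmt17_general T N hN1 hN2
end

section
/- Let (A,·,[·,·,·]) be a ternary F-manifold algebra, (V;ρ,μ) a representation of A, and T : V → A a relative Rota–Baxter operator on A with respect to (V;ρ,μ). Then the linear map N_T : A⊕V → A⊕V defined by N_T(x+u) = Tu (for x ∈ A, u ∈ V) is a Nijenhuis operator on the semidirect product ternary F-manifold algebra A⊕V, whose operations are (x1+v1)·(x2+v2) = x1·x2 + μ(x1)v2 + μ(x2)v1 and [x1+v1, x2+v2, x3+v3] = [x1,x2,x3] + ρ(x1,x2)v3 − ρ(x1,x3)v2 + ρ(x2,x3)v1; that is, N_T satisfies N_T(a)·N_T(b) = N_T(N_T(a)·b + a·N_T(b) − N_T(a·b)) and [N_T a, N_T b, N_T c] = N_T([N_T a, N_T b, c] + [N_T a, b, N_T c] + [a, N_T b, N_T c] − N_T[N_T a,b,c] − N_T[a,N_T b,c] − N_T[a,b,N_T c] + N_T²[a,b,c]) for all a,b,c ∈ A⊕V. -/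
open TensorProduct

/-!
The operator `N_T` squares to zero, and for a square-zero additive map every term of the Nijenhuis
identity in which `N` is applied twice disappears; what is left is the Rota–Baxter identity of
weight zero. On the semidirect product, the arguments `N_T a = (T a.2, 0)` have no `V`-component, so
this identity for `N_T` only involves the `V`-components of its arguments, and there it is the
relative Rota–Baxter identity for `T`, up to the skew-symmetry of `ρ`.
-/

section SquareZero

variable {E : Type*} [AddCommGroup E]

/-- `N` is a Nijenhuis operator for the binary operation `mul`. -/
def IsBinaryNijenhuis (mul : E → E → E) (N : E → E) : Prop :=
  ∀ a b, mul (N a) (N b) = N (mul (N a) b + mul a (N b) - N (mul a b))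

/-- `N` is a Nijenhuis operator for the ternary operation `br`. -/
def IsTernaryNijenhuis (br : E → E → E → E) (N : E → E) : Prop :=
  ∀ a b c, br (N a) (N b) (N c) =
    N (br (N a) (N b) c + br (N a) b (N c) + br a (N b) (N c)
      - N (br (N a) b c) - N (br a (N b) c) - N (br a b (N c)) + N (N (br a b c)))

/-- `N` is a Rota–Baxter operator of weight zero for the binary operation `mul`. -/
def IsBinaryRotaBaxter (mul : E → E → E) (N : E → E) : Prop :=
  ∀ a b, mul (N a) (N b) = N (mul (N a) b + mul a (N b))

/-- `N` is a Rota–Baxter operator of weight zero for the ternary operation `br`. -/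
def IsTernaryRotaBaxter (br : E → E → E → E) (N : E → E) : Prop :=
  ∀ a b c, br (N a) (N b) (N c) = N (br (N a) (N b) c + br (N a) b (N c) + br a (N b) (N c))

theorem isBinaryNijenhuis_iff_isBinaryRotaBaxter {N : E →+ E} (hN : ∀ a, N (N a) = 0)
    (mul : E → E → E) : IsBinaryNijenhuis mul N ↔ IsBinaryRotaBaxter mul N := by
  simp only [IsBinaryNijenhuis, IsBinaryRotaBaxter, map_sub, hN, sub_zero]

theorem isTernaryNijenhuis_iff_isTernaryRotaBaxter {N : E →+ E} (hN : ∀ a, N (N a) = 0)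
    (br : E → E → E → E) : IsTernaryNijenhuis br N ↔ IsTernaryRotaBaxter br N := by
  simp only [IsTernaryNijenhuis, IsTernaryRotaBaxter, map_add, map_sub, hN, sub_zero, add_zero]

end SquareZero

section SemidirectProduct

variable {K : Type*} [Field K] {A V : Type*} [AddCommGroup A] [Module K A]
  [AddCommGroup V] [Module K V]

/-- The operator `nT Tm` bundled as an additive map. -/
def nTHom (Tm : V →ₗ[K] A) : A × V →+ A × V where
  toFun := nT Tm
  map_zero' := by simp [nT]
  map_add' := by simp [nT]

theorem nTHom_nTHom (Tm : V →ₗ[K] A) (a : A × V) : nTHom Tm (nTHom Tm a) = 0 := by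
  simp [nTHom, nT]

theorem sdMul_nT_nT (T : TernaryFM K A) (μ : A →ₗ[K] V →ₗ[K] V) (Tm : V →ₗ[K] A) (a b : A × V) :
    sdMul T μ (nT Tm a) (nT Tm b) = (T.mul (Tm a.2) (Tm b.2), 0) := by
  simp [sdMul, nT]

theorem nT_sdMul_add_sdMul (T : TernaryFM K A) (μ : A →ₗ[K] V →ₗ[K] V) (Tm : V →ₗ[K] A)
    (a b : A × V) :
    nT Tm (sdMul T μ (nT Tm a) b + sdMul T μ a (nT Tm b)) =
      (Tm (μ (Tm a.2) b.2 + μ (Tm b.2) a.2), 0) := by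
  simp [sdMul, nT]

theorem sdBr_nT_nT_nT (T : TernaryFM K A) (ρ : A →ₗ[K] A →ₗ[K] V →ₗ[K] V) (Tm : V →ₗ[K] A)
    (a b c : A × V) :
    sdBr T ρ (nT Tm a) (nT Tm b) (nT Tm c) = (T.br (Tm a.2) (Tm b.2) (Tm c.2), 0) := by
  simp [sdBr, nT]

theorem nT_sdBr_add_sdBr_add_sdBr (T : TernaryFM K A) {ρ : A →ₗ[K] A →ₗ[K] V →ₗ[K] V}
    (hρ : ∀ x y, ρ x y = -ρ y x) (Tm : V →ₗ[K] A) (a b c : A × V) :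
    nT Tm (sdBr T ρ (nT Tm a) (nT Tm b) c + sdBr T ρ (nT Tm a) b (nT Tm c)
        + sdBr T ρ a (nT Tm b) (nT Tm c)) =
      (Tm (ρ (Tm a.2) (Tm b.2) c.2 + ρ (Tm b.2) (Tm c.2) a.2 + ρ (Tm c.2) (Tm a.2) b.2), 0) := by
  simp only [sdBr, nT, Prod.snd_add, map_zero, sub_zero, add_zero, zero_add, zero_sub,
    hρ (Tm c.2) (Tm a.2), LinearMap.neg_apply]
  rw [add_right_comm]

theorem isBinaryRotaBaxter_nT_iff (T : TernaryFM K A) (μ : A →ₗ[K] V →ₗ[K] V) (Tm : V →ₗ[K] A) :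
    IsBinaryRotaBaxter (sdMul T μ) (nT Tm) ↔
      ∀ u v, T.mul (Tm u) (Tm v) = Tm (μ (Tm u) v + μ (Tm v) u) := by
  simp only [IsBinaryRotaBaxter, sdMul_nT_nT, nT_sdMul_add_sdMul, Prod.mk.injEq, and_true,
    Prod.forall, forall_const]

theorem isTernaryRotaBaxter_nT_iff (T : TernaryFM K A) {ρ : A →ₗ[K] A →ₗ[K] V →ₗ[K] V}
    (hρ : ∀ x y, ρ x y = -ρ y x) (Tm : V →ₗ[K] A) :
    IsTernaryRotaBaxter (sdBr T ρ) (nT Tm) ↔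
      ∀ u v w, T.br (Tm u) (Tm v) (Tm w) =
        Tm (ρ (Tm u) (Tm v) w + ρ (Tm v) (Tm w) u + ρ (Tm w) (Tm u) v) := by
  simp only [IsTernaryRotaBaxter, sdBr_nT_nT_nT, nT_sdBr_add_sdBr_add_sdBr T hρ, Prod.mk.injEq,
    and_true, Prod.forall, forall_const]

theorem stmt18_general (T : TernaryFM K A) {ρ : A →ₗ[K] A →ₗ[K] V →ₗ[K] V}
    (hρ : ∀ x y, ρ x y = -ρ y x) (μ : A →ₗ[K] V →ₗ[K] V) (Tm : V →ₗ[K] A) :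
    IsBinaryNijenhuis (sdMul T μ) (nT Tm) ∧ IsTernaryNijenhuis (sdBr T ρ) (nT Tm) ↔
      IsRelRB T ρ μ Tm :=
  and_congr
    ((isBinaryNijenhuis_iff_isBinaryRotaBaxter (nTHom_nTHom Tm) _).trans
      (isBinaryRotaBaxter_nT_iff T μ Tm))
    ((isTernaryNijenhuis_iff_isTernaryRotaBaxter (nTHom_nTHom Tm) _).trans
      (isTernaryRotaBaxter_nT_iff T hρ Tm))

end SemidirectProduct

/-- `N_T(x+u) = Tu` is a Nijenhuis operator on the semidirect
product ternary F-manifold algebra `A ⊕ V`. -/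
theorem stmt18 {K : Type*} [Field K] [CharZero K]
    {A V : Type*} [AddCommGroup A] [Module K A] [AddCommGroup V] [Module K V]
    (T : TernaryFM K A) (ρ : A →ₗ[K] A →ₗ[K] V →ₗ[K] V) (μ : A →ₗ[K] V →ₗ[K] V)
    (hrep : IsFMRep T ρ μ) (Tm : V →ₗ[K] A) (hrb : IsRelRB T ρ μ Tm) :
    (∀ a b : A × V,
      sdMul T μ (nT Tm a) (nT Tm b) =
        nT Tm (sdMul T μ (nT Tm a) b + sdMul T μ a (nT Tm b) - nT Tm (sdMul T μ a b))) ∧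
    (∀ a b c : A × V,
      sdBr T ρ (nT Tm a) (nT Tm b) (nT Tm c) =
        nT Tm (sdBr T ρ (nT Tm a) (nT Tm b) c + sdBr T ρ (nT Tm a) b (nT Tm c)
          + sdBr T ρ a (nT Tm b) (nT Tm c)
          - nT Tm (sdBr T ρ (nT Tm a) b c) - nT Tm (sdBr T ρ a (nT Tm b) c)
          - nT Tm (sdBr T ρ a b (nT Tm c))
          + nT Tm (nT Tm (sdBr T ρ a b c)))) :=
  (stmt18_general T hrep.1.1 μ Tm).2 hrb
end
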